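/- Let α ∈ (0,1), λ ∈ [0,1). Set b₀ = b₋(α,λ) and c₀ = (1-λ)·b₀/(1-α). Then 0 ≤ b₀ ≤ 1, 0 ≤ c₀ ≤ 1, b₀ + α·c₀ = S(α,λ), λ·b₀ + c₀ = S(α,λ), and λ·b₀² + (αλ-α+1)·b₀·c₀ - (λ+1)·b₀ - c₀ + 1 = 0. -/

import Mathlib

noncomputable def S (a lam : ℝ) : ℝ :=
  (1 - a * lam) * ((2 - a * lam - a) + (lam - 1) * Real.sqrt (4 * a - 3 * a ^ 2)) /
    (2 * (1 - a) * (a * lam - a * lam ^ 2 - a + 1))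

noncomputable def bPlus (a lam : ℝ) : ℝ :=
  ((2 - a * lam - a) + (1 - lam) * Real.sqrt (4 * a - 3 * a ^ 2)) /
    (2 * (-(a * lam ^ 2) + a * lam - a + 1))

noncomputable def bMinus (a lam : ℝ) : ℝ :=
  ((2 - a * lam - a) - (1 - lam) * Real.sqrt (4 * a - 3 * a ^ 2)) /
    (2 * (-(a * lam ^ 2) + a * lam - a + 1))

noncomputable def s1 (a lam b : ℝ) : ℝ :=
  ((a * lam ^ 2 - a * lam) * b ^ 2 + b - 1) / ((a * lam - a + 1) * b - 1)

noncomputable def s2 (a lam b : ℝ) : ℝ :=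
  ((1 - a) * b ^ 2 + (a * lam + a - 1) * b - a) / ((a * lam - a + 1) * b - 1)

noncomputable def f (a lam : ℝ) : ℝ :=
  2 * (1 - a) * (a * lam - a * lam ^ 2 - a + 1) /
    ((1 - a * lam) * ((2 - a * lam - a) + (lam - 1) * Real.sqrt (4 * a - 3 * a ^ 2)))

/-!
The number `b₋` is the smaller root of the quadratic `D b² - P b + (1 - α)` with
`D = 1 - α + αλ - αλ²` and `P = 2 - αλ - α`, whose discriminant is `(1 - λ)² (4α - 3α²)`. On the
line `b + α c = λ b + c` the quadratic constraint is this polynomial divided by `1 - α`, and the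
common value of the two linear forms at `b₋` is `S`. For the bounds, clear the root from the
numerator: `b₋ (P + (1 - λ) √(4α - 3α²)) = 2 (1 - α)`. Since `√(4α - 3α²) ≥ α`, the factor is at
least `2 (1 - αλ)`, so `b₋ ≥ 0` and `S ≤ 1`; then `b + α c = λ b + c = S ≤ 1` bounds both
coordinates by `1`.
-/

section Algebra

variable {K : Type*} [Field K] {a : K}

/-- The second coordinate `c` of the point with first coordinate `b` on the line
`b + a * c = lam * b + c`, where the two linear constraints agree. -/
def companion (a lam b : K) : K :=
  (1 - lam) * b / (1 - a)

lemma add_mul_companion (ha : 1 - a ≠ 0) (lam b : K) :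
    b + a * companion a lam b = (1 - a * lam) / (1 - a) * b := by
  unfold companion
  field_simp
  ring

lemma mul_add_companion (ha : 1 - a ≠ 0) (lam b : K) :
    lam * b + companion a lam b = (1 - a * lam) / (1 - a) * b := by
  unfold companion
  field_simp
  ring

lemma quadratic_constraint_companion (ha : 1 - a ≠ 0) (lam b : K) :
    lam * b ^ 2 + (a * lam - a + 1) * b * companion a lam b - (lam + 1) * b -
        companion a lam b + 1 =
      ((-(a * lam ^ 2) + a * lam - a + 1) * (b * b) + -(2 - a * lam - a) * b + (1 - a)) /
        (1 - a) := by
  unfold companion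
  field_simp
  ring

lemma discrim_bMinus_quadratic {R : Type*} [CommRing R] (a lam : R) :
    discrim (-(a * lam ^ 2) + a * lam - a + 1) (-(2 - a * lam - a)) (1 - a) =
      (1 - lam) ^ 2 * (4 * a - 3 * a ^ 2) := by
  unfold discrim
  ring

end Algebra

lemma companion_nonneg {K : Type*} [Field K] [LinearOrder K] [IsStrictOrderedRing K] {a lam b : K}
    (ha : a ≤ 1) (hlam : lam ≤ 1) (hb : 0 ≤ b) : 0 ≤ companion a lam b :=
  div_nonneg (mul_nonneg (sub_nonneg.2 hlam) hb) (sub_nonneg.2 ha)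

section BMinus

variable {a lam : ℝ}

lemma four_mul_sub_nonneg (ha0 : 0 ≤ a) (ha : 3 * a ≤ 4) : 0 ≤ 4 * a - 3 * a ^ 2 := by
  have := mul_nonneg ha0 (sub_nonneg.2 ha)
  linarith

lemma S_eq_mul_bMinus (a lam : ℝ) : S a lam = (1 - a * lam) / (1 - a) * bMinus a lam := by
  unfold S bMinus
  rw [div_mul_div_comm]
  congr 1 <;> ring

lemma bMinus_quadratic_eq_zero (hrad : 0 ≤ 4 * a - 3 * a ^ 2)
    (hlead : -(a * lam ^ 2) + a * lam - a + 1 ≠ 0) :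
    (-(a * lam ^ 2) + a * lam - a + 1) * (bMinus a lam * bMinus a lam) +
      -(2 - a * lam - a) * bMinus a lam + (1 - a) = 0 := by
  have discrim_eq_sq : discrim (-(a * lam ^ 2) + a * lam - a + 1) (-(2 - a * lam - a)) (1 - a) =
      (1 - lam) * √(4 * a - 3 * a ^ 2) * ((1 - lam) * √(4 * a - 3 * a ^ 2)) := by
    rw [discrim_bMinus_quadratic, mul_mul_mul_comm, Real.mul_self_sqrt hrad, sq (1 - lam)]
  refine (quadratic_eq_zero_iff hlead discrim_eq_sq _).2 (Or.inr ?_)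
  rw [bMinus, neg_neg]

lemma bMinus_mul_conjugate (hrad : 0 ≤ 4 * a - 3 * a ^ 2)
    (hlead : -(a * lam ^ 2) + a * lam - a + 1 ≠ 0) :
    bMinus a lam * (2 - a * lam - a + (1 - lam) * √(4 * a - 3 * a ^ 2)) = 2 * (1 - a) := by
  rw [bMinus, div_mul_eq_mul_div, div_eq_iff (mul_ne_zero two_ne_zero hlead)]
  linear_combination -(1 - lam) ^ 2 * Real.sq_sqrt hrad

lemma le_sqrt_four_mul_sub (ha0 : 0 ≤ a) (ha1 : a ≤ 1) : a ≤ √(4 * a - 3 * a ^ 2) :=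
  Real.le_sqrt_of_sq_le (by nlinarith)

lemma two_mul_one_sub_mul_le_conjugate (ha0 : 0 ≤ a) (ha1 : a ≤ 1) (hlam : lam ≤ 1) :
    2 * (1 - a * lam) ≤ 2 - a * lam - a + (1 - lam) * √(4 * a - 3 * a ^ 2) := by
  have := mul_le_mul_of_nonneg_left (le_sqrt_four_mul_sub ha0 ha1) (sub_nonneg.2 hlam)
  linarith

lemma bMinus_leadingCoeff_pos (ha0 : 0 ≤ a) (ha1 : a < 1) (hlam0 : 0 ≤ lam) (hlam1 : lam ≤ 1) :
    0 < -(a * lam ^ 2) + a * lam - a + 1 := by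
  have := mul_nonneg (mul_nonneg ha0 hlam0) (sub_nonneg.2 hlam1)
  linarith

lemma bMinus_nonneg (ha0 : 0 ≤ a) (ha1 : a < 1) (hlam : lam ≤ 1)
    (hlead : -(a * lam ^ 2) + a * lam - a + 1 ≠ 0) : 0 ≤ bMinus a lam := by
  have one_sub_mul_pos : 0 < 1 - a * lam :=
    sub_pos.2 ((mul_le_of_le_one_right ha0 hlam).trans_lt ha1)
  have conjugate_pos := (mul_pos two_pos one_sub_mul_pos).trans_le
    (two_mul_one_sub_mul_le_conjugate ha0 ha1.le hlam)
  have hmul := bMinus_mul_conjugate (four_mul_sub_nonneg ha0 (by linarith)) hlead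
  exact nonneg_of_mul_nonneg_left (by linarith) conjugate_pos

lemma S_le_one (ha0 : 0 ≤ a) (ha1 : a < 1) (hlam : lam ≤ 1)
    (hlead : -(a * lam ^ 2) + a * lam - a + 1 ≠ 0) : S a lam ≤ 1 := by
  have hmul := bMinus_mul_conjugate (four_mul_sub_nonneg ha0 (by linarith)) hlead
  have hle := mul_le_mul_of_nonneg_left (two_mul_one_sub_mul_le_conjugate ha0 ha1.le hlam)
    (bMinus_nonneg ha0 ha1 hlam hlead)
  rw [S_eq_mul_bMinus, div_mul_eq_mul_div, div_le_one (sub_pos.2 ha1)]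
  linarith

end BMinus

theorem stmt_2 (a lam : ℝ) (ha0 : 0 < a) (ha1 : a < 1)
    (hl0 : 0 ≤ lam) (hl1 : lam < 1) :
    0 ≤ bMinus a lam ∧ bMinus a lam ≤ 1 ∧
    0 ≤ (1 - lam) * bMinus a lam / (1 - a) ∧ (1 - lam) * bMinus a lam / (1 - a) ≤ 1 ∧
    bMinus a lam + a * ((1 - lam) * bMinus a lam / (1 - a)) = S a lam ∧
    lam * bMinus a lam + (1 - lam) * bMinus a lam / (1 - a) = S a lam ∧
    lam * (bMinus a lam) ^ 2 +
      (a * lam - a + 1) * bMinus a lam * ((1 - lam) * bMinus a lam / (1 - a)) -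
      (lam + 1) * bMinus a lam - (1 - lam) * bMinus a lam / (1 - a) + 1 = 0 := by
  have one_sub_ne : 1 - a ≠ 0 := (sub_pos.2 ha1).ne'
  have hlead := (bMinus_leadingCoeff_pos ha0.le ha1 hl0 hl1.le).ne'
  have b_nonneg := bMinus_nonneg ha0.le ha1 hl1.le hlead
  have c_nonneg := companion_nonneg ha1.le hl1.le b_nonneg
  have b_add_mul_c_eq_S : bMinus a lam + a * companion a lam (bMinus a lam) = S a lam := by
    rw [add_mul_companion one_sub_ne, S_eq_mul_bMinus]
  have mul_b_add_c_eq_S : lam * bMinus a lam + companion a lam (bMinus a lam) = S a lam := by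
    rw [mul_add_companion one_sub_ne, S_eq_mul_bMinus]
  have S_le := S_le_one ha0.le ha1 hl1.le hlead
  have b_le_one : bMinus a lam ≤ 1 := by linarith [mul_nonneg ha0.le c_nonneg]
  have c_le_one : companion a lam (bMinus a lam) ≤ 1 := by linarith [mul_nonneg hl0 b_nonneg]
  refine ⟨b_nonneg, b_le_one, c_nonneg, c_le_one, b_add_mul_c_eq_S, mul_b_add_c_eq_S, ?_⟩
  have hquad := bMinus_quadratic_eq_zero (four_mul_sub_nonneg ha0.le (by linarith)) hlead
  exact (quadratic_constraint_companion one_sub_ne lam _).trans (by rw [hquad, zero_div])
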